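/- Appendix Lemma (bound on the relative heat-conductivity term): Assume ψ̂ ∈ C³(ℝ^{19} × (0,∞)) satisfies the growth conditions, that ∇²_ξ ψ̂(ξ,θ) is positive definite and ∂_θ η̂(ξ,θ) > 0 for all (ξ,θ), and let M, δ > 0. Let k : ℝ^{19} × (0,∞) → (0,∞) be C¹ and suppose there are δ̲ > 0 and C' > 0 such that k(ξ,θ) + θ²/k(ξ,θ) ≤ C' ê(ξ,θ) for all (ξ,θ). Then there exists a constant C = C(δ̲) > 0 such that for every (ξ,v,θ) ∈ ℝ^{19} × ℝ³ × (0,∞) with θ ≥ δ̲ and every (ξ̄,v̄,θ̄) ∈ Γ_{M,δ}: (θ²/k(ξ,θ)) | k(ξ,θ)/θ − k(ξ̄,θ̄)/θ̄ |² ≤ C I(ξ,v,θ|ξ̄,v̄,θ̄). -/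

import Mathlib

open Real MeasureTheory Filter Set Topology ENNReal NNReal

noncomputable section

abbrev Vec3 := Fin 3 → ℝ
abbrev Mat3 := Fin 3 → Fin 3 → ℝ
abbrev Xi := Mat3 × Mat3 × ℝ
abbrev Idx := (Fin 3 × Fin 3) ⊕ ((Fin 3 × Fin 3) ⊕ Unit)
abbrev FullState := Xi × Vec3 × ℝ

/-- Levi-Civita symbol on three indices. -/
def eps3 (i j k : Fin 3) : ℝ :=
  if (i, j, k) = (0, 1, 2) ∨ (i, j, k) = (1, 2, 0) ∨ (i, j, k) = (2, 0, 1) then 1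
  else if (i, j, k) = (2, 1, 0) ∨ (i, j, k) = (1, 0, 2) ∨ (i, j, k) = (0, 2, 1) then -1
  else 0

/-- Cofactor matrix (cof F)_{iα} = (1/2) ε_{ijk} ε_{αβγ} F_{jβ} F_{kγ}. -/
def cof3 (F : Mat3) : Mat3 := fun i α =>
  (1/2) * ∑ j, ∑ k, ∑ β, ∑ γ, eps3 i j k * eps3 α β γ * F j β * F k γ

/-- det F = (1/6) ε_{ijk} ε_{αβγ} F_{iα} F_{jβ} F_{kγ}. -/
def det3 (F : Mat3) : ℝ :=
  (1/6) * ∑ i, ∑ j, ∑ k, ∑ α, ∑ β, ∑ γ,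
    eps3 i j k * eps3 α β γ * F i α * F j β * F k γ

/-- The vector of null Lagrangians Φ(F) = (F, cof F, det F). -/
def Phi3 (F : Mat3) : Xi := (F, cof3 F, det3 F)

/-- Component ξ^B of ξ ∈ ℝ^19. -/
def xiComp (ξ : Xi) : Idx → ℝ
  | .inl (i, α) => ξ.1 i α
  | .inr (.inl (i, α)) => ξ.2.1 i α
  | .inr (.inr _) => ξ.2.2

def updMat (F : Mat3) (i α : Fin 3) (s : ℝ) : Mat3 :=
  Function.update F i (Function.update (F i) α s)

/-- Update component B of ξ to value s. -/
def xiUpd (ξ : Xi) : Idx → ℝ → Xi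
  | .inl (i, α), s => (updMat ξ.1 i α s, ξ.2)
  | .inr (.inl (i, α)), s => (ξ.1, updMat ξ.2.1 i α s, ξ.2.2)
  | .inr (.inr _), s => (ξ.1, ξ.2.1, s)

/-- ∂Φ^B/∂F_{iα}(F). -/
def dPhi (B : Idx) (i α : Fin 3) (F : Mat3) : ℝ :=
  deriv (fun s => xiComp (Phi3 (updMat F i α s)) B) (F i α)

/-- Partial derivative ∂ψ̂/∂ξ^B of a function ψ̂(ξ, θ). -/
def dXi (B : Idx) (ψ : Xi → ℝ → ℝ) (ξ : Xi) (θ : ℝ) : ℝ :=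
  deriv (fun s => ψ (xiUpd ξ B s) θ) (xiComp ξ B)

/-- Partial derivative ∂ψ̂/∂θ. -/
def dTh (ψ : Xi → ℝ → ℝ) (ξ : Xi) (θ : ℝ) : ℝ :=
  deriv (fun s => ψ ξ s) θ

/-- η̂(ξ,θ) = −∂_θ ψ̂(ξ,θ). -/
def etaHat (ψ : Xi → ℝ → ℝ) (ξ : Xi) (θ : ℝ) : ℝ := -(dTh ψ ξ θ)

/-- ê(ξ,θ) = ψ̂(ξ,θ) − θ ∂_θ ψ̂(ξ,θ). -/
def eHat (ψ : Xi → ℝ → ℝ) (ξ : Xi) (θ : ℝ) : ℝ := ψ ξ θ - θ * dTh ψ ξ θ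

/-- Spatial partial derivative ∂_α of a space-time field. -/
def pdx (α : Fin 3) (f : Vec3 → ℝ → ℝ) (x : Vec3) (t : ℝ) : ℝ :=
  deriv (fun s => f (Function.update x α s) t) (x α)

/-- Time derivative ∂_t of a space-time field. -/
def pdt (f : Vec3 → ℝ → ℝ) (x : Vec3) (t : ℝ) : ℝ :=
  deriv (fun s => f x s) t

def mnorm (F : Mat3) : ℝ := Real.sqrt (∑ i, ∑ j, (F i j)^2)
def vnorm (v : Vec3) : ℝ := Real.sqrt (∑ i, (v i)^2)

/-- |ξ|_{p,q,r} = |F|^p + |ζ|^q + |w|^r. -/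
def xiNorm (p q r : ℝ) (ξ : Xi) : ℝ :=
  mnorm ξ.1 ^ p + mnorm ξ.2.1 ^ q + |ξ.2.2| ^ r

/-- The compact set Γ_{M,δ}. -/
def Gamma (M δ : ℝ) : Set FullState :=
  {U | mnorm U.1.1 ≤ M ∧ mnorm U.1.2.1 ≤ M ∧ |U.1.2.2| ≤ M ∧
       vnorm U.2.1 ≤ M ∧ δ ≤ U.2.2 ∧ U.2.2 ≤ M}

/-- Relative free energy ψ̂(ξ,θ|ξ̄,θ̄). -/
def psiRel (ψ : Xi → ℝ → ℝ) (ξ : Xi) (θ : ℝ) (ξ' : Xi) (θ' : ℝ) : ℝ :=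
  ψ ξ θ - ψ ξ' θ' - (∑ B : Idx, dXi B ψ ξ' θ' * (xiComp ξ B - xiComp ξ' B))
    + etaHat ψ ξ' θ' * (θ - θ')

/-- Relative entropy function η̂(ξ,θ|ξ̄,θ̄). -/
def etaRel (ψ : Xi → ℝ → ℝ) (ξ : Xi) (θ : ℝ) (ξ' : Xi) (θ' : ℝ) : ℝ :=
  etaHat ψ ξ θ - etaHat ψ ξ' θ'
    - (∑ B : Idx, dXi B (etaHat ψ) ξ' θ' * (xiComp ξ B - xiComp ξ' B))
    - dTh (etaHat ψ) ξ' θ' * (θ - θ')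

/-- Relative stress (∂ψ̂/∂ξ^B)(ξ,θ|ξ̄,θ̄). -/
def dXiRel (B : Idx) (ψ : Xi → ℝ → ℝ) (ξ : Xi) (θ : ℝ) (ξ' : Xi) (θ' : ℝ) : ℝ :=
  dXi B ψ ξ θ - dXi B ψ ξ' θ'
    - (∑ A : Idx, dXi A (dXi B ψ) ξ' θ' * (xiComp ξ A - xiComp ξ' A))
    - dTh (dXi B ψ) ξ' θ' * (θ - θ')

/-- Relative entropy I(ξ,v,θ|ξ̄,v̄,θ̄). -/
def relEnt (ψ : Xi → ℝ → ℝ) (ξ : Xi) (v : Vec3) (θ : ℝ)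
    (ξ' : Xi) (v' : Vec3) (θ' : ℝ) : ℝ :=
  psiRel ψ ξ θ ξ' θ' + (1/2) * (∑ i, (v i - v' i)^2)
    + (etaHat ψ ξ θ - etaHat ψ ξ' θ') * (θ - θ')

/-- ψ̂ is C³ on ℝ^19 × (0,∞). -/
def PsiC3 (ψ : Xi → ℝ → ℝ) : Prop :=
  ContDiffOn ℝ 3 (fun p : Xi × ℝ => ψ p.1 p.2) (Set.univ ×ˢ Set.Ioi (0:ℝ))

/-- ∇²_ξ ψ̂ > 0 and ∂_θ η̂ > 0. -/
def PsiConvex (ψ : Xi → ℝ → ℝ) : Prop :=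
  ∀ ξ : Xi, ∀ θ : ℝ, 0 < θ →
    (∀ u : Idx → ℝ, u ≠ 0 →
      0 < ∑ A : Idx, ∑ B : Idx, dXi A (dXi B ψ) ξ θ * u A * u B) ∧
    0 < dTh (etaHat ψ) ξ θ

def gradFnorm (ψ : Xi → ℝ → ℝ) (ξ : Xi) (θ : ℝ) : ℝ :=
  Real.sqrt (∑ i, ∑ α, (dXi (.inl (i, α)) ψ ξ θ)^2)
def gradZnorm (ψ : Xi → ℝ → ℝ) (ξ : Xi) (θ : ℝ) : ℝ :=
  Real.sqrt (∑ i, ∑ α, (dXi (.inr (.inl (i, α))) ψ ξ θ)^2)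
def gradWnorm (ψ : Xi → ℝ → ℝ) (ξ : Xi) (θ : ℝ) : ℝ :=
  |dXi (.inr (.inr ())) ψ ξ θ|

/-- The growth conditions (gr.con.1)-(gr.con.3). -/
def GrowthCond (ψ : Xi → ℝ → ℝ) (c p q r ℓ : ℝ) : Prop :=
  0 < c ∧
  (∀ ξ : Xi, ∀ θ : ℝ, 0 < θ →
    c * (xiNorm p q r ξ + θ ^ ℓ) - c ≤ eHat ψ ξ θ ∧
    eHat ψ ξ θ ≤ c * (xiNorm p q r ξ + θ ^ ℓ) + c) ∧
  (∀ ε : ℝ, 0 < ε → ∃ R : ℝ, ∀ ξ : Xi, ∀ θ : ℝ, 0 < θ →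
    R < xiNorm p q r ξ + θ ^ ℓ →
    gradFnorm ψ ξ θ + gradZnorm ψ ξ θ ^ (p/(p-1)) + gradWnorm ψ ξ θ ^ (p/(p-2))
      ≤ ε * (xiNorm p q r ξ + θ ^ ℓ)) ∧
  (∀ ε : ℝ, 0 < ε → ∃ R : ℝ, ∀ ξ : Xi, ∀ θ : ℝ, 0 < θ →
    R < xiNorm p q r ξ + θ ^ ℓ →
    |dTh ψ ξ θ| ≤ ε * (xiNorm p q r ξ + θ ^ ℓ))

/-- The augmented thermoviscoelasticity system with fields (Z, Q, r), at a point (x,t). -/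
def AugSys (ψ : Xi → ℝ → ℝ) (ξf : Vec3 → ℝ → Xi) (vf : Vec3 → ℝ → Vec3)
    (θf : Vec3 → ℝ → ℝ) (Z : Vec3 → ℝ → Mat3) (Q : Vec3 → ℝ → Vec3)
    (r : Vec3 → ℝ → ℝ) (x : Vec3) (t : ℝ) : Prop :=
  (∀ B : Idx, pdt (fun y s => xiComp (ξf y s) B) x t
      = ∑ α, pdx α (fun y s => ∑ i, dPhi B i α (ξf y s).1 * vf y s i) x t) ∧
  (∀ i, pdt (fun y s => vf y s i) x t
      = ∑ α, pdx α (fun y s =>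
          ∑ B : Idx, dXi B ψ (ξf y s) (θf y s) * dPhi B i α (ξf y s).1) x t
        + ∑ α, pdx α (fun y s => Z y s i α) x t) ∧
  (pdt (fun y s => (1/2) * (∑ i, (vf y s i)^2) + eHat ψ (ξf y s) (θf y s)) x t
      = ∑ α, pdx α (fun y s => ∑ i,
          (∑ B : Idx, dXi B ψ (ξf y s) (θf y s) * dPhi B i α (ξf y s).1) * vf y s i) x t
        + ∑ α, pdx α (fun y s => ∑ i, Z y s i α * vf y s i) x t
        + ∑ α, pdx α (fun y s => Q y s α) x t + r x t) ∧
  (∀ i α β, pdx α (fun y s => (ξf y s).1 i β) x t = pdx β (fun y s => (ξf y s).1 i α) x t)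

/-- The entropy production identity for the augmented system. -/
def EntropyIdent (ψ : Xi → ℝ → ℝ) (ξf : Vec3 → ℝ → Xi) (vf : Vec3 → ℝ → Vec3)
    (θf : Vec3 → ℝ → ℝ) (Z : Vec3 → ℝ → Mat3) (Q : Vec3 → ℝ → Vec3)
    (r : Vec3 → ℝ → ℝ) (x : Vec3) (t : ℝ) : Prop :=
  pdt (fun y s => etaHat ψ (ξf y s) (θf y s)) x t
    - ∑ α, pdx α (fun y s => Q y s α / θf y s) x t
  = (∑ α, pdx α θf x t * Q x t α) / (θf x t)^2
    + (∑ α, ∑ i, pdx α (fun y s => vf y s i) x t * Z x t i α) / θf x t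
    + r x t / θf x t

/-- Newtonian viscous stress Z = μ ∇v. -/
def newtonianZ (μ : Mat3 → ℝ → ℝ) (ξf : Vec3 → ℝ → Xi) (vf : Vec3 → ℝ → Vec3)
    (θf : Vec3 → ℝ → ℝ) : Vec3 → ℝ → Mat3 :=
  fun x t i α => μ (ξf x t).1 (θf x t) * pdx α (fun y s => vf y s i) x t

/-- Fourier heat flux Q = k ∇θ. -/
def fourierQ (k : Mat3 → ℝ → ℝ) (ξf : Vec3 → ℝ → Xi)
    (θf : Vec3 → ℝ → ℝ) : Vec3 → ℝ → Vec3 :=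
  fun x t α => k (ξf x t).1 (θf x t) * pdx α θf x t

/-- The entropy identity for Newtonian viscosity and Fourier heat conduction (zero supply). -/
def EntropyIdentNF (ψ : Xi → ℝ → ℝ) (μ k : Mat3 → ℝ → ℝ) (ξf : Vec3 → ℝ → Xi)
    (vf : Vec3 → ℝ → Vec3) (θf : Vec3 → ℝ → ℝ) (x : Vec3) (t : ℝ) : Prop :=
  pdt (fun y s => etaHat ψ (ξf y s) (θf y s)) x t
    - ∑ α, pdx α (fun y s =>
        k (ξf y s).1 (θf y s) * pdx α θf y s / θf y s) x t
  = k (ξf x t).1 (θf x t) * (∑ α, (pdx α θf x t)^2) / (θf x t)^2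
    + μ (ξf x t).1 (θf x t) *
        (∑ α, ∑ i, (pdx α (fun y s => vf y s i) x t)^2) / θf x t

/-- Fundamental domain of the 3-torus. -/
def Box : Set Vec3 := Set.Icc 0 1

/-- Periodicity in the space variables with period 1. -/
def PeriodicX {E : Type*} (f : Vec3 → ℝ → E) : Prop :=
  ∀ (x : Vec3) (t : ℝ) (α : Fin 3), f (x + Pi.single α 1) t = f x t

/-- C^n regularity of a space-time field. -/
def FieldC {E : Type*} [NormedAddCommGroup E] [NormedSpace ℝ E]
    (n : ℕ) (f : Vec3 → ℝ → E) : Prop :=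
  ContDiff ℝ n (fun p : Vec3 × ℝ => f p.1 p.2)

/-- Spatial integral of the relative entropy at time t. -/
def relEntInt (ψ : Xi → ℝ → ℝ) (ξf : Vec3 → ℝ → Xi) (vf : Vec3 → ℝ → Vec3)
    (θf : Vec3 → ℝ → ℝ) (ξf' : Vec3 → ℝ → Xi) (vf' : Vec3 → ℝ → Vec3)
    (θf' : Vec3 → ℝ → ℝ) (t : ℝ) : ℝ :=
  ∫ x in Box, relEnt ψ (ξf x t) (vf x t) (θf x t) (ξf' x t) (vf' x t) (θf' x t)


/-- Spatial partial derivative of a static field. -/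
def pds (α : Fin 3) (f : Vec3 → ℝ) (x : Vec3) : ℝ :=
  deriv (fun s => f (Function.update x α s)) (x α)

/-- Deformation gradient ∇y of a static map y : ℝ³ → ℝ³. -/
def gradV (y : Vec3 → Vec3) (x : Vec3) : Mat3 :=
  fun i α => pds α (fun z => y z i) x

/-- ∂ψ/∂F_{iα} for ψ = ψ(F,θ). -/
def dFM (i α : Fin 3) (ψ : Mat3 → ℝ → ℝ) (F : Mat3) (θ : ℝ) : ℝ :=
  deriv (fun s => ψ (updMat F i α s) θ) (F i α)

/-- ∂ψ/∂θ for ψ = ψ(F,θ). -/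
def dThM (ψ : Mat3 → ℝ → ℝ) (F : Mat3) (θ : ℝ) : ℝ :=
  deriv (fun s => ψ F s) θ

/-- Index set for the full extended state U = (ξ, v, θ) ∈ ℝ²³. -/
abbrev UIdx := Idx ⊕ (Fin 3 ⊕ Unit)

def uComp (U : FullState) : UIdx → ℝ
  | .inl B => xiComp U.1 B
  | .inr (.inl i) => U.2.1 i
  | .inr (.inr _) => U.2.2

def uUpd (U : FullState) : UIdx → ℝ → FullState
  | .inl B, s => (xiUpd U.1 B s, U.2)
  | .inr (.inl i), s => (U.1, Function.update U.2.1 i s, U.2.2)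
  | .inr (.inr _), s => (U.1, U.2.1, s)

/-- Partial derivative in the state variables (ξ,v,θ). -/
def pdU (B : UIdx) (f : FullState → ℝ) (U : FullState) : ℝ :=
  deriv (fun s => f (uUpd U B s)) (uComp U B)

/-- Second partial derivative in the state variables (ξ,v,θ). -/
def pdU2 (A B : UIdx) (f : FullState → ℝ) (U : FullState) : ℝ :=
  pdU A (fun V => pdU B f V) U

/-- Test functions for the weak formulation on T³ × [0,T):
C¹, periodic in x, compactly supported in time in [0,T). -/
def TestFun (T : ℝ) (φ : Vec3 → ℝ → ℝ) : Prop :=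
  ContDiff ℝ 1 (fun p : Vec3 × ℝ => φ p.1 p.2) ∧ PeriodicX φ ∧
  ∃ T' : ℝ, T' < T ∧ ∀ (x : Vec3) (t : ℝ), T' ≤ t → φ x t = 0

/-- The elastic stress Σ_{iα} of the augmented constitutive theory. -/
def SigmaA (ψ : Xi → ℝ → ℝ) (ξ : Xi) (θ : ℝ) (i α : Fin 3) : ℝ :=
  ∑ B : Idx, dXi B ψ ξ θ * dPhi B i α ξ.1


def SS : Set (Xi × ℝ) := Set.univ ×ˢ Set.Ioi (0:ℝ)

lemma isOpen_SS : IsOpen SS := isOpen_univ.prod isOpen_Ioi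

lemma mem_SS {ξ : Xi} {θ : ℝ} (h : 0 < θ) : (ξ, θ) ∈ SS := ⟨trivial, h⟩

/-- Basis vectors of the nineteen dimensional space. -/
def eB (B : Idx) : Xi := xiUpd 0 B 1

lemma xiUpd_eq (ξ : Xi) (B : Idx) (s : ℝ) :
    xiUpd ξ B s = ξ + (s - xiComp ξ B) • eB B := by
  rcases B with ⟨i, α⟩ | ⟨i, α⟩ | _
  · refine Prod.ext ?_ (by simp [xiUpd, eB])
    ext a b
    by_cases ha : a = i
    · subst ha
      by_cases hb : b = α
      · subst hb; simp [xiUpd, eB, updMat, xiComp]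
      · simp [xiUpd, eB, updMat, xiComp, hb]
    · simp [xiUpd, eB, updMat, xiComp, ha]
  · refine Prod.ext (by simp [xiUpd, eB]) (Prod.ext ?_ (by simp [xiUpd, eB]))
    ext a b
    by_cases ha : a = i
    · subst ha
      by_cases hb : b = α
      · subst hb; simp [xiUpd, eB, updMat, xiComp]
      · simp [xiUpd, eB, updMat, xiComp, hb]
    · simp [xiUpd, eB, updMat, xiComp, ha]
  · refine Prod.ext (by simp [xiUpd, eB]) (Prod.ext (by simp [xiUpd, eB]) ?_)
    simp [xiUpd, eB, xiComp]

lemma xi_sum (u : Xi) : u = ∑ B : Idx, xiComp u B • eB B := by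
  refine Prod.ext ?_ (Prod.ext ?_ ?_)
  · ext a b
    simp only [Fintype.sum_sum_type, Fintype.sum_prod_type, Fin.sum_univ_three]
    fin_cases a <;> fin_cases b <;> simp [xiComp, eB, xiUpd, updMat]
  · ext a b
    simp only [Fintype.sum_sum_type, Fintype.sum_prod_type, Fin.sum_univ_three]
    fin_cases a <;> fin_cases b <;> simp [xiComp, eB, xiUpd, updMat]
  · simp only [Fintype.sum_sum_type, Fintype.sum_prod_type, Fin.sum_univ_three]
    simp [xiComp, eB, xiUpd, updMat]

lemma xiComp_smul (t : ℝ) (u : Xi) (B : Idx) : xiComp (t • u) B = t * xiComp u B := by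
  rcases B with ⟨i, α⟩ | ⟨i, α⟩ | _ <;> simp [xiComp]

lemma xiComp_sub (u w : Xi) (B : Idx) : xiComp (u - w) B = xiComp u B - xiComp w B := by
  rcases B with ⟨i, α⟩ | ⟨i, α⟩ | _ <;> simp [xiComp]

lemma xiComp_ne_zero (u : Xi) (h : u ≠ 0) : xiComp u ≠ 0 := by
  intro h0
  apply h
  rw [xi_sum u]
  simp [h0]

lemma continuous_xiComp (B : Idx) : Continuous (fun u : Xi => xiComp u B) := by
  rcases B with ⟨i, α⟩ | ⟨i, α⟩ | _ <;> simp only [xiComp] <;> fun_prop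

lemma abs_xiComp_le (u : Xi) (B : Idx) : |xiComp u B| ≤ ‖u‖ := by
  rcases B with ⟨i, α⟩ | ⟨i, α⟩ | _
  · exact ((norm_le_pi_norm (u.1 i) α).trans (norm_le_pi_norm u.1 i)).trans (norm_fst_le u)
  · exact ((norm_le_pi_norm (u.2.1 i) α).trans (norm_le_pi_norm u.2.1 i)).trans
      ((norm_fst_le u.2).trans (norm_snd_le u))
  · exact (norm_snd_le u.2).trans (norm_snd_le u)

lemma dXi_eq (f : Xi → ℝ → ℝ) (B : Idx) (ξ : Xi) (θ : ℝ)
    (hf : DifferentiableAt ℝ (fun z : Xi × ℝ => f z.1 z.2) (ξ, θ)) :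
    dXi B f ξ θ = fderiv ℝ (fun z : Xi × ℝ => f z.1 z.2) (ξ, θ) (eB B, 0) := by
  have h1 : HasDerivAt (fun s : ℝ => (xiUpd ξ B s, θ)) (eB B, (0:ℝ)) (xiComp ξ B) := by
    refine HasDerivAt.prodMk ?_ (hasDerivAt_const _ _)
    have : xiUpd ξ B = fun s => ξ + (s - xiComp ξ B) • eB B := by
      funext s; exact xiUpd_eq ξ B s
    rw [this]
    simpa using (((hasDerivAt_id (xiComp ξ B)).sub_const (xiComp ξ B)).smul_const (eB B)).const_add ξ
  have h2 : (xiUpd ξ B (xiComp ξ B), θ) = (ξ, θ) := by rw [xiUpd_eq]; simp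
  have h3 := HasFDerivAt.comp_hasDerivAt (xiComp ξ B) (h2 ▸ hf.hasFDerivAt) h1
  rw [h2] at h3
  exact h3.deriv

lemma dTh_eq (f : Xi → ℝ → ℝ) (ξ : Xi) (θ : ℝ)
    (hf : DifferentiableAt ℝ (fun z : Xi × ℝ => f z.1 z.2) (ξ, θ)) :
    dTh f ξ θ = fderiv ℝ (fun z : Xi × ℝ => f z.1 z.2) (ξ, θ) (0, 1) := by
  have h1 : HasDerivAt (fun s : ℝ => (ξ, s)) ((0:Xi), (1:ℝ)) θ :=
    (hasDerivAt_const _ _).prodMk (hasDerivAt_id θ)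
  exact (HasFDerivAt.comp_hasDerivAt θ hf.hasFDerivAt h1).deriv

lemma diffAt {f : Xi → ℝ → ℝ} {n : WithTop ℕ∞} (hn : n ≠ 0)
    (hf : ContDiffOn ℝ n (fun z : Xi × ℝ => f z.1 z.2) SS) {ξ : Xi} {θ : ℝ} (h : 0 < θ) :
    DifferentiableAt ℝ (fun z : Xi × ℝ => f z.1 z.2) (ξ, θ) :=
  (hf.differentiableOn hn).differentiableAt (isOpen_SS.mem_nhds (mem_SS h))

lemma contDiffOn_dXi {f : Xi → ℝ → ℝ} {n m : WithTop ℕ∞} (hm : m + 1 ≤ n)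
    (hf : ContDiffOn ℝ n (fun z : Xi × ℝ => f z.1 z.2) SS) (B : Idx) :
    ContDiffOn ℝ m (fun z : Xi × ℝ => dXi B f z.1 z.2) SS := by
  have hn : n ≠ 0 := by
    rintro rfl
    simp at hm
  refine ((hf.fderiv_of_isOpen isOpen_SS hm).clm_apply
    (contDiffOn_const (c := (eB B, (0:ℝ))))).congr ?_
  rintro ⟨ξ, θ⟩ ⟨-, h⟩
  exact dXi_eq f B ξ θ (diffAt hn hf h)

lemma contDiffOn_dTh {f : Xi → ℝ → ℝ} {n m : WithTop ℕ∞} (hm : m + 1 ≤ n)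
    (hf : ContDiffOn ℝ n (fun z : Xi × ℝ => f z.1 z.2) SS) :
    ContDiffOn ℝ m (fun z : Xi × ℝ => dTh f z.1 z.2) SS := by
  have hn : n ≠ 0 := by
    rintro rfl
    simp at hm
  refine ((hf.fderiv_of_isOpen isOpen_SS hm).clm_apply
    (contDiffOn_const (c := ((0:Xi), (1:ℝ))))).congr ?_
  rintro ⟨ξ, θ⟩ ⟨-, h⟩
  exact dTh_eq f ξ θ (diffAt hn hf h)

lemma line_deriv {f : Xi → ℝ → ℝ} {n : WithTop ℕ∞} (hn : n ≠ 0)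
    (hf : ContDiffOn ℝ n (fun z : Xi × ℝ => f z.1 z.2) SS) (ξ u : Xi) {θ : ℝ} (h : 0 < θ) (t : ℝ) :
    HasDerivAt (fun t : ℝ => f (ξ + t • u) θ)
      (∑ B : Idx, dXi B f (ξ + t • u) θ * xiComp u B) t := by
  have h1 : HasDerivAt (fun t : ℝ => (ξ + t • u, θ)) (u, (0:ℝ)) t := by
    refine HasDerivAt.prodMk ?_ (hasDerivAt_const _ _)
    simpa using ((hasDerivAt_id t).smul_const u).const_add ξ
  have hd := diffAt hn hf (ξ := ξ + t • u) h
  have h3 := HasFDerivAt.comp_hasDerivAt t hd.hasFDerivAt h1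
  have hu : (u, (0:ℝ)) = ∑ B : Idx, xiComp u B • (eB B, (0:ℝ)) := by
    refine Prod.ext ?_ ?_
    · rw [Prod.fst_sum]; exact xi_sum u
    · rw [Prod.snd_sum]; simp
  have key : fderiv ℝ (fun z : Xi × ℝ => f z.1 z.2) (ξ + t • u, θ) (u, 0) =
      ∑ B : Idx, dXi B f (ξ + t • u) θ * xiComp u B := by
    rw [hu, map_sum]
    refine Finset.sum_congr rfl fun B _ => ?_
    rw [map_smul, dXi_eq f B _ _ hd, smul_eq_mul, mul_comm]
  rw [← key]
  exact h3

lemma th_deriv {f : Xi → ℝ → ℝ} {n : WithTop ℕ∞} (hn : n ≠ 0)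
    (hf : ContDiffOn ℝ n (fun z : Xi × ℝ => f z.1 z.2) SS) (ξ : Xi) {θ : ℝ} (h : 0 < θ) :
    HasDerivAt (fun s : ℝ => f ξ s) (dTh f ξ θ) θ := by
  have h1 : HasDerivAt (fun s : ℝ => (ξ, s)) ((0:Xi), (1:ℝ)) θ :=
    (hasDerivAt_const _ _).prodMk (hasDerivAt_id θ)
  exact (HasFDerivAt.comp_hasDerivAt θ (diffAt hn hf h).hasFDerivAt h1).differentiableAt.hasDerivAt

lemma mono01 {g g' : ℝ → ℝ} (h1 : ∀ t ∈ Icc (0:ℝ) 1, HasDerivAt g (g' t) t)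
    (h2 : ∀ t ∈ Icc (0:ℝ) 1, 0 ≤ g' t) : MonotoneOn g (Icc (0:ℝ) 1) := by
  refine monotoneOn_of_deriv_nonneg (convex_Icc 0 1)
    (fun t ht => (h1 t ht).continuousAt.continuousWithinAt)
    (fun t ht => (h1 t (interior_subset ht)).differentiableAt.differentiableWithinAt) ?_
  intro t ht
  rw [(h1 t (interior_subset ht)).deriv]
  exact h2 t (interior_subset ht)

lemma taylor01 {g g' g'' : ℝ → ℝ} {m : ℝ}
    (h1 : ∀ t ∈ Icc (0:ℝ) 1, HasDerivAt g (g' t) t)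
    (h2 : ∀ t ∈ Icc (0:ℝ) 1, HasDerivAt g' (g'' t) t)
    (h3 : ∀ t ∈ Icc (0:ℝ) 1, m ≤ g'' t) : m / 2 ≤ g 1 - g 0 - g' 0 := by
  have a := mono01 (g := fun t => g' t - m * t) (g' := fun t => g'' t - m * 1)
    (fun t ht => (h2 t ht).sub ((hasDerivAt_id t).const_mul m))
    (fun t ht => by linarith [h3 t ht])
  have b := mono01 (g := fun t => g t - g' 0 * t - m / 2 * t ^ 2)
    (g' := fun t => g' t - g' 0 * 1 - m / 2 * (((2:ℕ):ℝ) * t ^ (2-1)))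
    (fun t ht => ((h1 t ht).sub ((hasDerivAt_id t).const_mul (g' 0))).sub
      ((hasDerivAt_pow 2 t).const_mul (m / 2)))
    (fun t ht => by
      have := a (by simp) ht ht.1
      simp at this ⊢
      linarith)
  have := b (by simp : (0:ℝ) ∈ Icc (0:ℝ) 1) (by simp : (1:ℝ) ∈ Icc (0:ℝ) 1) zero_le_one
  simp at this
  linarith

def KK (a L : ℝ) : Set (Xi × ℝ) := Metric.closedBall (0:Xi) L ×ˢ Icc a L

lemma isCompact_KK (a L : ℝ) : IsCompact (KK a L) :=
  (isCompact_closedBall _ _).prod isCompact_Icc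

lemma convex_KK (a L : ℝ) : Convex ℝ (KK a L) :=
  (convex_closedBall _ _).prod (convex_Icc _ _)

lemma KK_sub {a L : ℝ} (ha : 0 < a) : KK a L ⊆ SS := by
  rintro ⟨ξ, θ⟩ ⟨-, h⟩
  exact mem_SS (ha.trans_le h.1)

/-- Uniform bound for continuous functions on the compact set. -/
lemma bdd_KK {f : Xi × ℝ → ℝ} {a L : ℝ} (ha : 0 < a) (hf : ContinuousOn f SS) :
    ∃ A : ℝ, 0 ≤ A ∧ ∀ z ∈ KK a L, |f z| ≤ A := by
  obtain ⟨A, hA⟩ := (isCompact_KK a L).exists_bound_of_continuousOn (hf.mono (KK_sub ha))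
  exact ⟨max A 0, le_max_right _ _, fun z hz => (hA z hz).trans (le_max_left _ _)⟩

lemma pos_min {X : Type*} [TopologicalSpace X] {s : Set X} (hs : IsCompact s) {f : X → ℝ}
    (hf : ContinuousOn f s) (hpos : ∀ x ∈ s, 0 < f x) : ∃ m : ℝ, 0 < m ∧ ∀ x ∈ s, m ≤ f x := by
  rcases s.eq_empty_or_nonempty with rfl | hne
  · exact ⟨1, one_pos, by simp⟩
  · obtain ⟨x, hx, h⟩ := hs.exists_isMinOn hne hf
    exact ⟨f x, hpos x hx, fun y hy => h hy⟩

lemma hess_lower {ψ : Xi → ℝ → ℝ} (hψ3 : PsiC3 ψ) (hconv : PsiConvex ψ) {a L : ℝ} (ha : 0 < a) :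
    ∃ m : ℝ, 0 < m ∧ ∀ z ∈ KK a L, ∀ u : Xi,
      m * ‖u‖ ^ 2 ≤ ∑ A : Idx, ∑ B : Idx, dXi A (dXi B ψ) z.1 z.2 * xiComp u A * xiComp u B := by
  have hcont : ContinuousOn (fun y : (Xi × ℝ) × Xi => ∑ A : Idx, ∑ B : Idx,
      dXi A (dXi B ψ) y.1.1 y.1.2 * xiComp y.2 A * xiComp y.2 B)
      (KK a L ×ˢ Metric.sphere (0:Xi) 1) := by
    refine continuousOn_finsetSum _ fun A _ => continuousOn_finsetSum _ fun B _ => ?_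
    have h1 : ContDiffOn ℝ 1 (fun z : Xi × ℝ => dXi A (dXi B ψ) z.1 z.2) SS :=
      contDiffOn_dXi (n := 2) (by norm_num) (contDiffOn_dXi (n := 3) (by norm_num) hψ3 B) A
    have h2 := (h1.continuousOn.mono (KK_sub (L := L) ha)).comp
      (continuous_fst.continuousOn (s := KK a L ×ˢ Metric.sphere (0:Xi) 1)) (fun y hy => hy.1)
    exact (h2.mul ((continuous_xiComp A).comp continuous_snd).continuousOn).mul
      ((continuous_xiComp B).comp continuous_snd).continuousOn
  obtain ⟨m, hm, h⟩ := pos_min ((isCompact_KK a L).prod (isCompact_sphere _ _)) hcont (by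
    rintro ⟨z, u⟩ ⟨hz, hu⟩
    refine (hconv z.1 z.2 (KK_sub ha hz).2).1 (xiComp u) (xiComp_ne_zero u ?_)
    rintro rfl
    simp at hu)
  refine ⟨m, hm, fun z hz u => ?_⟩
  by_cases hu : u = 0
  · subst hu
    have : ∀ A, xiComp (0:Xi) A = 0 := fun A => by simpa using xiComp_smul 0 0 A
    simp [this]
  · have hn : 0 < ‖u‖ := norm_pos_iff.mpr hu
    have h1 := h (z, ‖u‖⁻¹ • u) ⟨hz, by simp [norm_smul, hn.ne']⟩
    simp only [xiComp_smul] at h1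
    have h2 : ∑ A : Idx, ∑ B : Idx, dXi A (dXi B ψ) z.1 z.2 * (‖u‖⁻¹ * xiComp u A)
        * (‖u‖⁻¹ * xiComp u B) = (‖u‖⁻¹)^2 *
        ∑ A : Idx, ∑ B : Idx, dXi A (dXi B ψ) z.1 z.2 * xiComp u A * xiComp u B := by
      rw [Finset.mul_sum]
      refine Finset.sum_congr rfl fun A _ => ?_
      rw [Finset.mul_sum]
      exact Finset.sum_congr rfl fun B _ => by ring
    rw [h2, inv_pow, inv_mul_eq_div, le_div_iff₀ (by positivity)] at h1
    exact h1

lemma contDiffOn_eta {ψ : Xi → ℝ → ℝ} (hψ3 : PsiC3 ψ) :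
    ContDiffOn ℝ 2 (fun z : Xi × ℝ => etaHat ψ z.1 z.2) SS :=
  (contDiffOn_dTh (n := 3) (by norm_num) hψ3).neg

/-- Quadratic lower bound for the relative entropy on compact sets. -/
lemma relEnt_lower {ψ : Xi → ℝ → ℝ} (hψ3 : PsiC3 ψ) (hconv : PsiConvex ψ) {a L : ℝ} (ha : 0 < a) :
    ∃ m : ℝ, 0 < m ∧ ∀ ξ θ ξ' θ' v v', (ξ, θ) ∈ KK a L → (ξ', θ') ∈ KK a L →
      m * ‖((ξ, θ) : Xi × ℝ) - (ξ', θ')‖ ^ 2 ≤ relEnt ψ ξ v θ ξ' v' θ' := by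
  obtain ⟨m₁, hm₁, H₁⟩ := hess_lower (L := L) hψ3 hconv ha
  have hηθ : ContDiffOn ℝ 1 (fun z : Xi × ℝ => dTh (etaHat ψ) z.1 z.2) SS :=
    contDiffOn_dTh (n := 2) (by norm_num) (contDiffOn_eta hψ3)
  obtain ⟨m₂, hm₂, H₂⟩ := pos_min (isCompact_KK a L) (hηθ.continuousOn.mono (KK_sub ha))
    (fun z hz => (hconv z.1 z.2 (KK_sub ha hz).2).2)
  refine ⟨min m₁ m₂ / 2, by positivity, ?_⟩
  intro ξ θ ξ' θ' v v' hz hz'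
  have hθ' : 0 < θ' := ha.trans_le hz'.2.1
  have hθ : 0 < θ := ha.trans_le hz.2.1
  have P1 : m₁ * ‖ξ - ξ'‖ ^ 2 / 2 ≤ ψ ξ θ' - ψ ξ' θ' -
      ∑ B : Idx, dXi B ψ ξ' θ' * (xiComp ξ B - xiComp ξ' B) := by
    have := taylor01 (m := m₁ * ‖ξ - ξ'‖ ^ 2) (g := fun t => ψ (ξ' + t • (ξ - ξ')) θ')
      (g' := fun t => ∑ B : Idx, dXi B ψ (ξ' + t • (ξ - ξ')) θ' * xiComp (ξ - ξ') B)
      (g'' := fun t => ∑ B : Idx, (∑ A : Idx, dXi A (dXi B ψ) (ξ' + t • (ξ - ξ')) θ' *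
        xiComp (ξ - ξ') A) * xiComp (ξ - ξ') B)
      (fun t ht => line_deriv (n := 3) (by norm_num) hψ3 ξ' (ξ - ξ') hθ' t)
      (fun t ht => HasDerivAt.fun_sum fun B _ => (line_deriv (n := 2) (by norm_num)
        (contDiffOn_dXi (n := 3) (by norm_num) hψ3 B) ξ' (ξ - ξ') hθ' t).mul_const _)
      (fun t ht => by
        have hmem : (ξ' + t • (ξ - ξ'), θ') ∈ KK a L :=
          ⟨(convex_closedBall (0:Xi) L).add_smul_sub_mem hz'.1 hz.1 ht, hz'.2⟩
        refine (H₁ _ hmem (ξ - ξ')).trans (le_of_eq ?_)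
        rw [Finset.sum_comm]
        refine Finset.sum_congr rfl fun B _ => ?_
        rw [Finset.sum_mul])
    simpa [xiComp_sub] using this
  have P2 : m₂ * (θ - θ') ^ 2 / 2 ≤ ψ ξ θ - ψ ξ θ' + etaHat ψ ξ θ * (θ - θ') := by
    have hpos : ∀ t ∈ Icc (0:ℝ) 1, θ + t * (θ' - θ) ∈ Icc a L := fun t ht =>
      (convex_Icc a L).add_smul_sub_mem hz.2 hz'.2 ht
    have hin : ∀ t : ℝ, HasDerivAt (fun t : ℝ => θ + t * (θ' - θ)) (θ' - θ) t := fun t => by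
      simpa using ((hasDerivAt_id t).mul_const (θ' - θ)).const_add θ
    have := taylor01 (m := m₂ * (θ - θ') ^ 2) (g := fun t => -ψ ξ (θ + t * (θ' - θ)))
      (g' := fun t => etaHat ψ ξ (θ + t * (θ' - θ)) * (θ' - θ))
      (g'' := fun t => dTh (etaHat ψ) ξ (θ + t * (θ' - θ)) * (θ' - θ) * (θ' - θ))
      (fun t ht => by
        have := ((th_deriv (n := 3) (by norm_num) hψ3 ξ (ha.trans_le (hpos t ht).1)).comp t
          (hin t)).neg
        have e : -(dTh ψ ξ (θ + t * (θ' - θ)) * (θ' - θ)) =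
            etaHat ψ ξ (θ + t * (θ' - θ)) * (θ' - θ) := by unfold etaHat; ring
        rw [← e]
        exact this)
      (fun t ht => ((th_deriv (n := 2) (by norm_num) (contDiffOn_eta hψ3) ξ
        (ha.trans_le (hpos t ht).1)).comp t (hin t)).mul_const _)
      (fun t ht => by
        have := H₂ (ξ, θ + t * (θ' - θ)) ⟨hz.1, hpos t ht⟩
        have h2 := mul_le_mul_of_nonneg_right this (sq_nonneg (θ' - θ))
        nlinarith [h2])
    simp at this
    linarith
  have hv : 0 ≤ ∑ i, (v i - v' i)^2 := Finset.sum_nonneg fun i _ => sq_nonneg _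
  have hI : relEnt ψ ξ v θ ξ' v' θ' = (ψ ξ θ' - ψ ξ' θ' -
      ∑ B : Idx, dXi B ψ ξ' θ' * (xiComp ξ B - xiComp ξ' B)) +
      (ψ ξ θ - ψ ξ θ' + etaHat ψ ξ θ * (θ - θ')) + (1/2) * ∑ i, (v i - v' i)^2 := by
    unfold relEnt psiRel; ring
  have hnorm : ‖((ξ, θ) : Xi × ℝ) - (ξ', θ')‖ ^ 2 ≤ ‖ξ - ξ'‖ ^ 2 + (θ - θ') ^ 2 := by
    rw [Prod.mk_sub_mk, Prod.norm_mk, Real.norm_eq_abs]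
    rcases max_cases ‖ξ - ξ'‖ |θ - θ'| with ⟨h, _⟩ | ⟨h, _⟩ <;> rw [h]
    · nlinarith [sq_nonneg (θ - θ')]
    · rw [sq_abs]; nlinarith [sq_nonneg ‖ξ - ξ'‖]
  have e1 := mul_le_mul_of_nonneg_right (min_le_left m₁ m₂) (sq_nonneg ‖ξ - ξ'‖)
  have e2 := mul_le_mul_of_nonneg_right (min_le_right m₁ m₂) (sq_nonneg (θ - θ'))
  have e3 := mul_le_mul_of_nonneg_left hnorm (le_of_lt (by positivity : 0 < min m₁ m₂ / 2))
  rw [hI]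
  nlinarith

lemma norm_le_mnorm (F : Mat3) : ‖F‖ ≤ mnorm F := by
  refine (pi_norm_le_iff_of_nonneg (Real.sqrt_nonneg _)).2 fun i =>
    (pi_norm_le_iff_of_nonneg (Real.sqrt_nonneg _)).2 fun j => ?_
  rw [Real.norm_eq_abs]
  refine Real.abs_le_sqrt ?_
  refine (Finset.single_le_sum (f := fun j => (F i j)^2) (fun j _ => sq_nonneg _)
    (Finset.mem_univ j)).trans ?_
  exact Finset.single_le_sum (f := fun i => ∑ j, (F i j)^2)
    (fun i _ => Finset.sum_nonneg fun j _ => sq_nonneg _) (Finset.mem_univ i)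

lemma norm_xi_le (ξ : Xi) {X : ℝ} (h1 : mnorm ξ.1 ≤ X) (h2 : mnorm ξ.2.1 ≤ X) (h3 : |ξ.2.2| ≤ X) :
    ‖ξ‖ ≤ X :=
  max_le ((norm_le_mnorm _).trans h1) (max_le ((norm_le_mnorm _).trans h2) h3)

lemma sublin {p ε : ℝ} (hp : 1 < p) (hε : 0 < ε) :
    ∃ T : ℝ, 0 < T ∧ ∀ x : ℝ, 0 ≤ x → x ≤ ε * x ^ p + T := by
  obtain ⟨T, hT⟩ := eventually_atTop.1 ((_root_.tendsto_rpow_atTop (sub_pos.2 hp)).eventually_ge_atTop ε⁻¹)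
  refine ⟨max T 1, by positivity, fun x hx => ?_⟩
  have h0 : 0 ≤ ε * x ^ p := by positivity
  by_cases hxT : max T 1 ≤ x
  · have h1 := hT x ((le_max_left _ _).trans hxT)
    have hx0 : 0 < x := lt_of_lt_of_le one_pos ((le_max_right _ _).trans hxT)
    rw [Real.rpow_sub_one hx0.ne'] at h1
    have : x ≤ ε * x ^ p := by
      rw [le_div_iff₀ hx0, inv_mul_le_iff₀ hε] at h1
      exact h1
    have : (0:ℝ) < max T 1 := by positivity
    linarith
  · linarith

lemma xi_sublin {p q r ε : ℝ} (hp : 1 < p) (hq : 1 < q) (hr : 1 < r) (hε : 0 < ε) :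
    ∃ T : ℝ, 0 < T ∧ ∀ ξ : Xi, ‖ξ‖ ≤ ε * xiNorm p q r ξ + T := by
  obtain ⟨T₁, h₁, H₁⟩ := sublin hp hε
  obtain ⟨T₂, h₂, H₂⟩ := sublin hq hε
  obtain ⟨T₃, h₃, H₃⟩ := sublin hr hε
  refine ⟨T₁ + T₂ + T₃, by positivity, fun ξ => ?_⟩
  have a1 : 0 ≤ mnorm ξ.1 := Real.sqrt_nonneg _
  have a2 : 0 ≤ mnorm ξ.2.1 := Real.sqrt_nonneg _
  have a3 : 0 ≤ |ξ.2.2| := abs_nonneg _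
  have b1 := H₁ _ a1
  have b2 := H₂ _ a2
  have b3 := H₃ _ a3
  have c1 : 0 ≤ ε * mnorm ξ.1 ^ p := by positivity
  have c2 : 0 ≤ ε * mnorm ξ.2.1 ^ q := by positivity
  have c3 : 0 ≤ ε * |ξ.2.2| ^ r := by positivity
  unfold xiNorm
  apply norm_xi_le <;> linarith

lemma xiNorm_nonneg (p q r : ℝ) (ξ : Xi) : 0 ≤ xiNorm p q r ξ := by
  have a1 : 0 ≤ mnorm ξ.1 := Real.sqrt_nonneg _
  have a2 : 0 ≤ mnorm ξ.2.1 := Real.sqrt_nonneg _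
  unfold xiNorm
  positivity

lemma Gamma_KK {M δ a L : ℝ} (ha : a ≤ δ) (hL : M ≤ L) {U : FullState} (hU : U ∈ Gamma M δ) :
    (U.1, U.2.2) ∈ KK a L := by
  obtain ⟨h1, h2, h3, -, h5, h6⟩ := hU
  refine ⟨?_, ha.trans h5, h6.trans hL⟩
  rw [mem_closedBall_zero_iff]
  exact (norm_xi_le _ h1 h2 h3).trans hL

/-- Lower bound for the relative entropy at infinity. -/
lemma relEnt_large {ψ : Xi → ℝ → ℝ} {c p q r ℓ : ℝ} (hψ3 : PsiC3 ψ)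
    (hgrow : GrowthCond ψ c p q r ℓ) (hp : 4 ≤ p) (hq : 1 < q) (hr : 1 < r)
    {M δ : ℝ} (hM : 0 < M) (hδ : 0 < δ) :
    ∃ R : ℝ, 1 ≤ R ∧ ∀ ξ v θ, 0 < θ → R < xiNorm p q r ξ + θ ^ ℓ → ∀ U' ∈ Gamma M δ,
      c / 4 * (xiNorm p q r ξ + θ ^ ℓ) ≤ relEnt ψ ξ v θ U'.1 U'.2.1 U'.2.2 := by
  obtain ⟨hc, hg1, -, hg3⟩ := hgrow
  obtain ⟨R₁, hR₁⟩ := hg3 (c / (4 * M)) (by positivity)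
  have hb : ∀ B : Idx, ∃ A : ℝ, 0 ≤ A ∧ ∀ z ∈ KK δ M, |dXi B ψ z.1 z.2| ≤ A := fun B =>
    bdd_KK hδ (contDiffOn_dXi (n := 3) (m := 2) (by norm_num) hψ3 B).continuousOn
  choose D hD0 hD using hb
  obtain ⟨A, hA0, hA⟩ := bdd_KK (f := fun z => ψ z.1 z.2) (L := M) hδ hψ3.continuousOn
  set E : ℝ := ∑ B, D B with hE
  have hE0 : 0 ≤ E := Finset.sum_nonneg fun B _ => hD0 B
  obtain ⟨T, hT0, hT⟩ := xi_sublin (p := p) (q := q) (r := r) (ε := c / (4 * (E + 1)))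
    (by linarith) hq hr (by positivity)
  refine ⟨max 1 (max R₁ (4 / c * (c + A + E * (T + M)))), le_max_left _ _, ?_⟩
  intro ξ v θ hθ hR U' hU'
  set N := xiNorm p q r ξ + θ ^ ℓ with hN
  have hNR₁ : R₁ < N := lt_of_le_of_lt ((le_max_left _ _).trans (le_max_right _ _)) hR
  have hNK : 4 / c * (c + A + E * (T + M)) < N :=
    lt_of_le_of_lt ((le_max_right _ _).trans (le_max_right _ _)) hR
  have hK := Gamma_KK le_rfl le_rfl hU'
  have hN0 : 0 ≤ N := add_nonneg (xiNorm_nonneg _ _ _ _) (by positivity)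
  have hxN : xiNorm p q r ξ ≤ N := by
    have : 0 ≤ θ ^ ℓ := by positivity
    linarith
  have h1 := (hg1 ξ θ hθ).1
  have h2 := hR₁ ξ θ hθ hNR₁
  have h3 := hA _ hK
  have hnξ : ‖ξ‖ ≤ c / (4 * (E + 1)) * N + T :=
    (hT ξ).trans (by gcongr)
  have hsum : ∑ B : Idx, dXi B ψ U'.1 U'.2.2 * (xiComp ξ B - xiComp U'.1 B)
      ≤ E * (‖ξ‖ + M) := by
    rw [hE, Finset.sum_mul]
    refine Finset.sum_le_sum fun B _ => ?_
    refine (le_abs_self _).trans ?_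
    rw [abs_mul, ← xiComp_sub]
    refine mul_le_mul (hD B _ hK) ?_ (abs_nonneg _) (hD0 B)
    refine (abs_xiComp_le _ _).trans ((norm_sub_le _ _).trans ?_)
    have := mem_closedBall_zero_iff.1 hK.1
    simp only at this
    linarith
  have hsum2 : E * (‖ξ‖ + M) ≤ c / 4 * N + E * (T + M) := by
    have e1 := mul_le_mul_of_nonneg_left hnξ hE0
    have e2 : E * (c / (4 * (E + 1)) * N) ≤ c / 4 * N := by
      have : E * (c / (4 * (E + 1)) * N) = (E / (E + 1)) * (c / 4 * N) := by
        field_simp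
      rw [this]
      exact mul_le_of_le_one_left (by positivity) ((div_le_one (by positivity)).2 (by linarith))
    nlinarith
  have hth : U'.2.2 * etaHat ψ ξ θ ≤ c / 4 * N := by
    have hU0 : 0 < U'.2.2 := hδ.trans_le hK.2.1
    have : etaHat ψ ξ θ ≤ c / (4 * M) * N := (neg_le_abs _).trans h2
    calc U'.2.2 * etaHat ψ ξ θ ≤ U'.2.2 * (c / (4 * M) * N) := by gcongr
      _ ≤ M * (c / (4 * M) * N) := by
        have := hK.2.2
        simp only at this
        gcongr
      _ = c / 4 * N := by field_simp
  have hKN : c + A + E * (T + M) < c / 4 * N := by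
    have := mul_lt_mul_of_pos_left hNK (by positivity : 0 < c / 4)
    have e : c / 4 * (4 / c * (c + A + E * (T + M))) = c + A + E * (T + M) := by field_simp
    linarith
  have hv : 0 ≤ ∑ i, (v i - U'.2.1 i)^2 := Finset.sum_nonneg fun i _ => sq_nonneg _
  have hψ' := (abs_le.1 h3).2
  simp only at hψ'
  have hI : relEnt ψ ξ v θ U'.1 U'.2.1 U'.2.2 = eHat ψ ξ θ - U'.2.2 * etaHat ψ ξ θ - ψ U'.1 U'.2.2
      - (∑ B : Idx, dXi B ψ U'.1 U'.2.2 * (xiComp ξ B - xiComp U'.1 B))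
      + (1/2) * ∑ i, (v i - U'.2.1 i)^2 := by
    unfold relEnt psiRel eHat etaHat; ring
  rw [hI]
  nlinarith

lemma lip_KK {f : Xi × ℝ → ℝ} {a L : ℝ} (ha : 0 < a) (hf : ContDiffOn ℝ 1 f SS) :
    ∃ A : ℝ, 0 ≤ A ∧ ∀ x ∈ KK a L, ∀ y ∈ KK a L, |f x - f y| ≤ A * ‖x - y‖ := by
  have hc : ContinuousOn (fderiv ℝ f) SS :=
    (hf.fderiv_of_isOpen (m := 0) isOpen_SS (by norm_num)).continuousOn
  obtain ⟨A, hA⟩ := (isCompact_KK a L).exists_bound_of_continuousOn (hc.mono (KK_sub ha))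
  refine ⟨max A 0, le_max_right _ _, fun x hx y hy => ?_⟩
  exact (convex_KK a L).norm_image_sub_le_of_norm_fderiv_le (𝕜 := ℝ)
    (fun z hz => (hf.differentiableOn (by norm_num)).differentiableAt
      (isOpen_SS.mem_nhds (KK_sub ha hz)))
    (fun z hz => (hA z hz).trans (le_max_left _ _)) hy hx

/-- Appendix Lemma A.3, bound on the relative
heat-conductivity term. -/
theorem bound_relative_heat_conductivity
    (ψ : Xi → ℝ → ℝ) (c p q r ℓ : ℝ)
    (hψ3 : PsiC3 ψ) (hconv : PsiConvex ψ)
    (hgrow : GrowthCond ψ c p q r ℓ)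
    (hp : 4 ≤ p) (hq : 1 < q) (hr : 1 < r) (hl : 1 < ℓ)
    (M δ : ℝ) (hM : 0 < M) (hδ : 0 < δ)
    (k : Xi → ℝ → ℝ)
    (hk1 : ContDiffOn ℝ 1 (fun z : Xi × ℝ => k z.1 z.2)
      (Set.univ ×ˢ Set.Ioi (0:ℝ)))
    (hkpos : ∀ (ξ : Xi) (θ : ℝ), 0 < θ → 0 < k ξ θ)
    (δ' C' : ℝ) (hδ' : 0 < δ') (hC' : 0 < C')
    (hkbd : ∀ (ξ : Xi) (θ : ℝ), 0 < θ →
      k ξ θ + θ^2 / k ξ θ ≤ C' * eHat ψ ξ θ) :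
    ∃ C : ℝ, 0 < C ∧
      ∀ (ξ : Xi) (v : Vec3) (θ : ℝ), δ' ≤ θ → ∀ U' ∈ Gamma M δ,
        θ^2 / k ξ θ * (k ξ θ / θ - k U'.1 U'.2.2 / U'.2.2)^2
          ≤ C * relEnt ψ ξ v θ U'.1 U'.2.1 U'.2.2 := by
  obtain ⟨R, hR1, hlarge⟩ := relEnt_large hψ3 hgrow hp hq hr hM hδ
  obtain ⟨hc, hg1, -, -⟩ := hgrow
  obtain ⟨T, hT0, hT⟩ := xi_sublin (p := p) (q := q) (r := r) (ε := 1) (by linarith) hq hr one_pos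
  obtain ⟨T', hT'0, hT'⟩ := sublin (p := ℓ) (ε := 1) hl one_pos
  set a := min δ δ' with ha_def
  have ha : 0 < a := lt_min hδ hδ'
  set L := M + R + T + T' with hL
  have hf : ContDiffOn ℝ 1 (fun z : Xi × ℝ => k z.1 z.2 / z.2) SS :=
    hk1.div contDiff_snd.contDiffOn (fun z hz => ne_of_gt hz.2)
  have hg : ContinuousOn (fun z : Xi × ℝ => z.2 ^ 2 / k z.1 z.2) SS :=
    (continuous_snd.pow 2).continuousOn.div hk1.continuousOn
      (fun z hz => (hkpos z.1 z.2 hz.2).ne')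
  obtain ⟨Λ, hΛ0, hΛ⟩ := lip_KK (L := L) ha hf
  obtain ⟨G, hG0, hG⟩ := bdd_KK (L := L) ha hg
  obtain ⟨κ, hκ0, hκ⟩ := bdd_KK (L := L) ha hf.continuousOn
  obtain ⟨m, hm, hlow⟩ := relEnt_lower (L := L) hψ3 hconv ha
  refine ⟨16 * (1 + κ ^ 2) * C' + G * Λ ^ 2 / m, by positivity, ?_⟩
  intro ξ v θ hθ U' hU'
  have hθ0 : 0 < θ := hδ'.trans_le hθ
  have hK' : (U'.1, U'.2.2) ∈ KK a L := Gamma_KK (min_le_left _ _) (by linarith) hU'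
  have hkp := hkpos ξ θ hθ0
  have hθℓ : 0 ≤ θ ^ ℓ := by positivity
  have hx0 := xiNorm_nonneg p q r ξ
  by_cases hN : R < xiNorm p q r ξ + θ ^ ℓ
  · have h1 := hlarge ξ v θ hθ0 hN U' hU'
    set N := xiNorm p q r ξ + θ ^ ℓ
    have h2 := (hg1 ξ θ hθ0).2
    have h3 := hkbd ξ θ hθ0
    have h4 : eHat ψ ξ θ ≤ 2 * c * N := by nlinarith
    set b := k U'.1 U'.2.2 / U'.2.2 with hb
    have hb2 : b ^ 2 ≤ κ ^ 2 := sq_le_sq' (abs_le.1 (hκ _ hK')).1 (abs_le.1 (hκ _ hK')).2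
    have hq0 : 0 ≤ θ ^ 2 / k ξ θ := by positivity
    have hI0 : 0 ≤ relEnt ψ ξ v θ U'.1 U'.2.1 U'.2.2 := le_trans (by positivity) h1
    calc θ^2 / k ξ θ * (k ξ θ / θ - b)^2
        ≤ θ^2 / k ξ θ * (2 * (k ξ θ / θ)^2 + 2 * κ ^ 2) := by
          gcongr
          nlinarith [sq_nonneg (k ξ θ / θ + b)]
      _ = 2 * k ξ θ + 2 * κ ^ 2 * (θ^2 / k ξ θ) := by field_simp
      _ ≤ 2 * (1 + κ ^ 2) * (k ξ θ + θ^2 / k ξ θ) := by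
          nlinarith [mul_nonneg (sq_nonneg κ) hkp.le]
      _ ≤ 2 * (1 + κ ^ 2) * (C' * (2 * c * N)) := by
          gcongr
          exact h3.trans (by gcongr)
      _ = 16 * (1 + κ ^ 2) * C' * (c / 4 * N) := by ring
      _ ≤ 16 * (1 + κ ^ 2) * C' * relEnt ψ ξ v θ U'.1 U'.2.1 U'.2.2 := by gcongr
      _ ≤ _ := by
          apply mul_le_mul_of_nonneg_right _ hI0
          have : 0 ≤ G * Λ ^ 2 / m := by positivity
          linarith
  · push Not at hN
    have hK : (ξ, θ) ∈ KK a L := by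
      refine ⟨?_, (min_le_right _ _).trans hθ, ?_⟩
      · rw [mem_closedBall_zero_iff]
        have := hT ξ
        simp only
        linarith
      · have := hT' θ hθ0.le
        simp only
        linarith
    have h1 := hlow ξ θ U'.1 U'.2.2 v U'.2.1 hK hK'
    have h2 := hΛ _ hK _ hK'
    have h3 := (abs_le.1 (hG _ hK)).2
    simp only at h2 h3
    set d := ‖((ξ, θ) : Xi × ℝ) - (U'.1, U'.2.2)‖ with hd
    have hI0 : 0 ≤ relEnt ψ ξ v θ U'.1 U'.2.1 U'.2.2 := le_trans (by positivity) h1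
    have hq0 : 0 ≤ θ ^ 2 / k ξ θ := by positivity
    have h4 : (k ξ θ / θ - k U'.1 U'.2.2 / U'.2.2)^2 ≤ (Λ * d) ^ 2 :=
      sq_le_sq' (abs_le.1 h2).1 (abs_le.1 h2).2
    calc θ^2 / k ξ θ * (k ξ θ / θ - k U'.1 U'.2.2 / U'.2.2)^2
        ≤ G * (Λ * d) ^ 2 := mul_le_mul h3 h4 (sq_nonneg _) hG0
      _ = G * Λ ^ 2 / m * (m * d ^ 2) := by field_simp
      _ ≤ G * Λ ^ 2 / m * relEnt ψ ξ v θ U'.1 U'.2.1 U'.2.2 := by gcongr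
      _ ≤ _ := by
          apply mul_le_mul_of_nonneg_right _ hI0
          have : 0 ≤ 16 * (1 + κ ^ 2) * C' := by positivity
          linarith

end
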